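/- Let a and b be real constants such that either (1) a = 1 and 1 ≤ b ≤ 4, or (2) 1 < a ≤ b and b ≤ 3 and b ≤ 1 + a and b ≤ 4a/(5a − 4). Then for every z ∈ 𝔻, |Im(z F(a,b;a+b;z))| ≤ π/(2 B(a,b)); that is, z ↦ z F(a,b;a+b;z) maps 𝔻 into the horizontal strip bounded by the lines Im w = ±π/(2B(a,b)). -/

import Mathlib

open Complex Filter MeasureTheory Metric Set

/-- The Gaussian hypergeometric function on the unit disc (power series). -/
noncomputable def hyperF (a b c : ℝ) (z : ℂ) : ℂ :=
  ∑' n : ℕ, (((ascPochhammer ℝ n).eval a * (ascPochhammer ℝ n).eval b /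
      ((ascPochhammer ℝ n).eval c * (n.factorial : ℝ)) : ℝ) : ℂ) * z ^ n

/-!
Write `z F(a,b;a+b;z) = ∑ λₙ zⁿ / n` with `λ₀ = 0`. The multipliers `λₙ` form a concave sequence
with limit `L = 1 / B(a,b)`, so `vₙ = L - λₙ` is convex and decreases to `0`. By Fejér's theorem
`v₀/2 + ∑ vₙ rⁿ cos nθ ≥ 0`, hence its antiderivative `v₀ θ/2 + ∑ vₙ rⁿ sin(nθ) / n` is monotone
in `θ`; it vanishes at `θ = 0` and equals `± v₀ π/2` at `θ = ± π`. The same holds for the constant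
sequence `v₀ = L`, and the imaginary part of `∑ λₙ zⁿ / n` is the difference of the two
antiderivatives, which therefore lies between `-L π/2` and `L π/2`.
-/

/-- Nonnegative, nonincreasing, convex real sequences: the cosine coefficients to which Fejér's
positivity theorem applies. -/
structure ConvexAntitone (v : ℕ → ℝ) : Prop where
  nonneg : ∀ n, 0 ≤ v n
  antitone : Antitone v
  convex : ∀ n, 2 * v (n + 1) ≤ v n + v (n + 2)

namespace ConvexAntitone

variable {u v : ℕ → ℝ}

theorem of_convex_of_tendsto_zero (hconvex : ∀ n, 2 * v (n + 1) ≤ v n + v (n + 2))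
    (hlim : Tendsto v atTop (nhds 0)) : ConvexAntitone v := by
  have hdiff : Monotone fun n => v (n + 1) - v n :=
    monotone_nat_of_le_succ fun n => by linarith [hconvex n]
  have hdiff_lim : Tendsto (fun n => v (n + 1) - v n) atTop (nhds 0) := by
    simpa using ((tendsto_add_atTop_iff_nat 1).2 hlim).sub hlim
  have hanti : Antitone v :=
    antitone_nat_of_succ_le fun n => sub_nonpos.1 (hdiff.ge_of_tendsto hdiff_lim n)
  exact ⟨hanti.le_of_tendsto hlim, hanti, hconvex⟩

theorem const {c : ℝ} (hc : 0 ≤ c) : ConvexAntitone fun _ => c :=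
  ⟨fun _ => hc, antitone_const, fun _ => (two_mul c).le⟩

theorem pow {r : ℝ} (hr0 : 0 ≤ r) (hr1 : r ≤ 1) : ConvexAntitone fun n => r ^ n where
  nonneg n := pow_nonneg hr0 n
  antitone := pow_right_anti₀ hr0 hr1
  convex n := by
    have : 0 ≤ r ^ n * (1 - r) ^ 2 := by positivity
    linear_combination this

theorem mul (hu : ConvexAntitone u) (hv : ConvexAntitone v) :
    ConvexAntitone fun n => u n * v n where
  nonneg n := mul_nonneg (hu.nonneg n) (hv.nonneg n)
  antitone _ n hmn :=
    mul_le_mul (hu.antitone hmn) (hv.antitone hmn) (hv.nonneg n) (hu.nonneg _)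
  convex n := by
    have hu_anti : u (n + 2) ≤ u n := hu.antitone (by omega)
    have hv_anti : v (n + 2) ≤ v n := hv.antitone (by omega)
    calc 2 * (u (n + 1) * v (n + 1)) = (2 * u (n + 1)) * (2 * v (n + 1)) / 2 := by ring
      _ ≤ (u n + u (n + 2)) * (v n + v (n + 2)) / 2 := by
        have hu_sum : 0 ≤ u n + u (n + 2) := add_nonneg (hu.nonneg _) (hu.nonneg _)
        have hv_nonneg : 0 ≤ 2 * v (n + 1) := mul_nonneg two_pos.le (hv.nonneg _)
        gcongr
        exacts [hu.convex n, hv.convex n]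
      _ ≤ u n * v n + u (n + 2) * v (n + 2) := by
        linarith [mul_nonneg (sub_nonneg.2 hu_anti) (sub_nonneg.2 hv_anti)]

theorem summable_mul_pow (hv : ConvexAntitone v) {r : ℝ} (hr0 : 0 ≤ r) (hr1 : r < 1) :
    Summable fun n => v n * r ^ n :=
  .of_nonneg_of_le (fun n => mul_nonneg (hv.nonneg n) (pow_nonneg hr0 n))
    (fun n => mul_le_mul_of_nonneg_right (hv.antitone (Nat.zero_le n)) (pow_nonneg hr0 n))
    ((summable_geometric_of_lt_one hr0 hr1).mul_left (v 0))

end ConvexAntitone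

theorem tendsto_natCast_mul_of_antitone_of_summable {v : ℕ → ℝ} (hanti : Antitone v)
    (hsum : Summable v) : Tendsto (fun N : ℕ => N * v N) atTop (nhds 0) := by
  have hnonneg (n : ℕ) : 0 ≤ v n := hanti.le_of_tendsto hsum.tendsto_atTop_zero n
  have htail (k : ℕ) : Tendsto (fun N => if k < N then v N else 0) atTop (nhds 0) := by
    refine hsum.tendsto_atTop_zero.congr' ?_
    filter_upwards [eventually_gt_atTop k] with N hN
    rw [if_pos hN]
  have hdom (N k : ℕ) : ‖if k < N then v N else 0‖ ≤ v k := by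
    split_ifs with hk
    · rw [Real.norm_of_nonneg (hnonneg N)]
      exact hanti hk.le
    · simpa using hnonneg k
  have hlim := tendsto_tsum_of_dominated_convergence hsum htail (.of_forall hdom)
  rw [tsum_zero] at hlim
  refine hlim.congr fun N => ?_
  rw [tsum_eq_sum (s := Finset.range N) fun k hk => if_neg (by simpa using hk),
    Finset.sum_congr rfl fun k hk => if_pos (Finset.mem_range.1 hk), Finset.sum_const,
    Finset.card_range, nsmul_eq_mul]

/-- Half the classical Dirichlet kernel: `1/2 + cos θ + ⋯ + cos nθ`. -/
noncomputable def dirichletKernel (θ : ℝ) (n : ℕ) : ℝ :=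
  1 / 2 + ∑ k ∈ Finset.range n, Real.cos ((k + 1) * θ)

theorem neg_natCast_le_dirichletKernel (θ : ℝ) (n : ℕ) : -(n : ℝ) ≤ dirichletKernel θ n := by
  have hsum : ∑ _k ∈ Finset.range n, (-1 : ℝ) ≤ ∑ k ∈ Finset.range n, Real.cos ((k + 1) * θ) :=
    Finset.sum_le_sum fun _ _ => Real.neg_one_le_cos _
  rw [Finset.sum_const, Finset.card_range, nsmul_eq_mul] at hsum
  rw [dirichletKernel]
  linarith

theorem two_mul_dirichletKernel (θ : ℝ) (n : ℕ) :
    2 * dirichletKernel θ n =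
      2 * ((∑ k ∈ Finset.range n, Real.cos (k * θ)) * Real.cos (n * θ) +
        (∑ k ∈ Finset.range n, Real.sin (k * θ)) * Real.sin (n * θ)) + 1 := by
  have hreflect : ∑ k ∈ Finset.range n, Real.cos ((k + 1) * θ) =
      ∑ k ∈ Finset.range n, Real.cos (n * θ - k * θ) := by
    rw [← Finset.sum_range_reflect]
    refine Finset.sum_congr rfl fun k hk => ?_
    have hk' : n - 1 - k + 1 = n - k := by grind
    rw [← Nat.cast_succ, Nat.succ_eq_add_one, hk', Nat.cast_sub (Finset.mem_range.1 hk).le, sub_mul]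
  rw [dirichletKernel, hreflect, Finset.sum_mul, Finset.sum_mul, ← Finset.sum_add_distrib]
  simp only [Real.cos_sub, mul_comm (Real.cos (n * θ)), mul_comm (Real.sin (n * θ))]
  ring

theorem two_mul_sum_dirichletKernel (θ : ℝ) (N : ℕ) :
    2 * ∑ n ∈ Finset.range N, dirichletKernel θ n =
      (∑ k ∈ Finset.range N, Real.cos (k * θ)) ^ 2 +
        (∑ k ∈ Finset.range N, Real.sin (k * θ)) ^ 2 := by
  induction N with
  | zero => simp
  | succ N ih =>
    simp only [Finset.sum_range_succ]
    linear_combination ih + two_mul_dirichletKernel θ N - Real.sin_sq_add_cos_sq (N * θ)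

theorem sum_dirichletKernel_nonneg (θ : ℝ) (N : ℕ) :
    0 ≤ ∑ n ∈ Finset.range N, dirichletKernel θ n := by
  linarith [two_mul_sum_dirichletKernel θ N, sq_nonneg (∑ k ∈ Finset.range N, Real.cos (k * θ)),
    sq_nonneg (∑ k ∈ Finset.range N, Real.sin (k * θ))]

theorem half_add_sum_mul_cos_eq_sum_second_difference (v : ℕ → ℝ) (θ : ℝ) (N : ℕ) :
    v 0 / 2 + ∑ n ∈ Finset.range N, v (n + 1) * Real.cos ((n + 1) * θ) =
      v N * dirichletKernel θ N +
        (v N - v (N + 1)) * ∑ m ∈ Finset.range N, dirichletKernel θ m +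
        ∑ n ∈ Finset.range N, (v n + v (n + 2) - 2 * v (n + 1)) *
          ∑ m ∈ Finset.range (n + 1), dirichletKernel θ m := by
  induction N with
  | zero =>
    have hkernel : dirichletKernel θ 0 = 1 / 2 := by simp [dirichletKernel]
    simp only [Finset.range_zero, Finset.sum_empty, hkernel]
    ring
  | succ N ih =>
    have hkernel : dirichletKernel θ (N + 1) = dirichletKernel θ N + Real.cos ((N + 1) * θ) := by
      simp [dirichletKernel, Finset.sum_range_succ, add_assoc]
    rw [Finset.sum_range_succ, ← add_assoc, ih,
      Finset.sum_range_succ (fun n => (v n + v (n + 2) - 2 * v (n + 1)) * _) N, hkernel]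
    simp only [Finset.sum_range_succ (dirichletKernel θ)]
    ring

namespace ConvexAntitone

variable {v : ℕ → ℝ}

theorem half_add_tsum_mul_cos_nonneg (hv : ConvexAntitone v) (hsum : Summable v) (θ : ℝ) :
    0 ≤ v 0 / 2 + ∑' n : ℕ, v (n + 1) * Real.cos ((n + 1) * θ) := by
  have hcos : Summable fun n : ℕ => v (n + 1) * Real.cos ((n + 1) * θ) := by
    refine .of_norm_bounded ((summable_nat_add_iff 1).2 hsum) fun n => ?_
    rw [norm_mul, Real.norm_of_nonneg (hv.nonneg _)]
    exact mul_le_of_le_one_right (hv.nonneg _) (Real.abs_cos_le_one _)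
  have hboundary : Tendsto (fun N : ℕ => -(N * v N)) atTop (nhds 0) := by
    simpa using (tendsto_natCast_mul_of_antitone_of_summable hv.antitone hsum).neg
  refine le_of_tendsto_of_tendsto' hboundary (hcos.hasSum.tendsto_sum_nat.const_add (v 0 / 2))
    fun N => ?_
  have hkernel := mul_le_mul_of_nonneg_left (neg_natCast_le_dirichletKernel θ N) (hv.nonneg N)
  have hfirst := mul_nonneg (sub_nonneg.2 (hv.antitone N.le_succ)) (sum_dirichletKernel_nonneg θ N)
  have hsecond : 0 ≤ ∑ n ∈ Finset.range N, (v n + v (n + 2) - 2 * v (n + 1)) *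
      ∑ m ∈ Finset.range (n + 1), dirichletKernel θ m :=
    Finset.sum_nonneg fun n _ =>
      mul_nonneg (sub_nonneg.2 (hv.convex n)) (sum_dirichletKernel_nonneg θ (n + 1))
  rw [half_add_sum_mul_cos_eq_sum_second_difference]
  linarith

end ConvexAntitone

/-- The antiderivative in `θ`, vanishing at `0`, of the cosine series `v₀/2 + ∑ vₙ cos nθ`. -/
noncomputable def cosSeriesPrimitive (v : ℕ → ℝ) (θ : ℝ) : ℝ :=
  v 0 / 2 * θ + ∑' n : ℕ, v (n + 1) / (n + 1) * Real.sin ((n + 1) * θ)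

theorem cosSeriesPrimitive_int_mul_pi (v : ℕ → ℝ) (k : ℤ) :
    cosSeriesPrimitive v (k * Real.pi) = v 0 / 2 * (k * Real.pi) := by
  have hsin (n : ℕ) : Real.sin ((n + 1) * (k * Real.pi)) = 0 := by
    rw [← mul_assoc]
    exact_mod_cast Real.sin_int_mul_pi ((n + 1) * k)
  simp [cosSeriesPrimitive, hsin]

section cosSeriesPrimitive

variable {v : ℕ → ℝ}

theorem summable_div_mul_sin (hsum : Summable v) (θ : ℝ) :
    Summable fun n : ℕ => v (n + 1) / (n + 1) * Real.sin ((n + 1) * θ) := by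
  refine .of_norm_bounded ((summable_nat_add_iff 1).2 hsum.norm) fun n => ?_
  rw [norm_mul, norm_div]
  refine mul_le_of_le_one_right (by positivity) (Real.abs_sin_le_one _) |>.trans ?_
  refine div_le_self (norm_nonneg _) ?_
  rw [Real.norm_of_nonneg (by positivity)]
  linarith [n.cast_nonneg (α := ℝ)]

theorem hasDerivAt_cosSeriesPrimitive (hsum : Summable v) (θ : ℝ) :
    HasDerivAt (cosSeriesPrimitive v)
      (v 0 / 2 + ∑' n : ℕ, v (n + 1) * Real.cos ((n + 1) * θ)) θ := by
  have hterm (n : ℕ) (t : ℝ) : HasDerivAt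
      (fun t => v (n + 1) / (n + 1) * Real.sin ((n + 1) * t))
      (v (n + 1) * Real.cos ((n + 1) * t)) t := by
    convert! (((hasDerivAt_id t).const_mul ((n : ℝ) + 1)).sin.const_mul (v (n + 1) / (n + 1)))
      using 1
    field_simp
    simp
  have hbound (n : ℕ) (t : ℝ) : ‖v (n + 1) * Real.cos ((n + 1) * t)‖ ≤ ‖v (n + 1)‖ := by
    rw [norm_mul]
    exact mul_le_of_le_one_right (norm_nonneg _) (Real.abs_cos_le_one _)
  have hlinear : HasDerivAt (fun t => v 0 / 2 * t) (v 0 / 2) θ := by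
    simpa using (hasDerivAt_id θ).const_mul (v 0 / 2)
  exact hlinear.add <| hasDerivAt_tsum ((summable_nat_add_iff 1).2 hsum.norm) hterm hbound
    (summable_div_mul_sin hsum 0) θ

end cosSeriesPrimitive

namespace ConvexAntitone

variable {u v : ℕ → ℝ}

theorem monotone_cosSeriesPrimitive (hv : ConvexAntitone v) (hsum : Summable v) :
    Monotone (cosSeriesPrimitive v) :=
  monotone_of_hasDerivAt_nonneg (hasDerivAt_cosSeriesPrimitive hsum)
    (hv.half_add_tsum_mul_cos_nonneg hsum)

theorem cosSeriesPrimitive_mem_Icc_of_nonneg (hv : ConvexAntitone v) (hsum : Summable v) {θ : ℝ}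
    (hθ : θ ∈ Icc 0 Real.pi) : cosSeriesPrimitive v θ ∈ Icc 0 (v 0 * (Real.pi / 2)) := by
  have hmono := hv.monotone_cosSeriesPrimitive hsum
  have h_zero : cosSeriesPrimitive v 0 = 0 := by simpa using cosSeriesPrimitive_int_mul_pi v 0
  have h_pi : cosSeriesPrimitive v Real.pi = v 0 / 2 * Real.pi := by
    simpa using cosSeriesPrimitive_int_mul_pi v 1
  constructor <;> linarith [hmono hθ.1, hmono hθ.2]

theorem cosSeriesPrimitive_mem_Icc_of_nonpos (hv : ConvexAntitone v) (hsum : Summable v) {θ : ℝ}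
    (hθ : θ ∈ Icc (-Real.pi) 0) : cosSeriesPrimitive v θ ∈ Icc (-(v 0 * (Real.pi / 2))) 0 := by
  have hmono := hv.monotone_cosSeriesPrimitive hsum
  have h_zero : cosSeriesPrimitive v 0 = 0 := by simpa using cosSeriesPrimitive_int_mul_pi v 0
  have h_neg_pi : cosSeriesPrimitive v (-Real.pi) = v 0 / 2 * -Real.pi := by
    simpa using cosSeriesPrimitive_int_mul_pi v (-1)
  constructor <;> linarith [hmono hθ.1, hmono hθ.2]

theorem abs_cosSeriesPrimitive_sub_le (hu : ConvexAntitone u) (hv : ConvexAntitone v)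
    (hu_sum : Summable u) (hv_sum : Summable v) (huv : u 0 = v 0) {θ : ℝ}
    (hθ : θ ∈ Icc (-Real.pi) Real.pi) :
    |cosSeriesPrimitive u θ - cosSeriesPrimitive v θ| ≤ v 0 * (Real.pi / 2) := by
  rcases le_total 0 θ with hθ0 | hθ0
  · have hu_mem := hu.cosSeriesPrimitive_mem_Icc_of_nonneg hu_sum ⟨hθ0, hθ.2⟩
    have hv_mem := hv.cosSeriesPrimitive_mem_Icc_of_nonneg hv_sum ⟨hθ0, hθ.2⟩
    rw [huv] at hu_mem
    simpa using abs_sub_le_of_le_of_le hu_mem.1 hu_mem.2 hv_mem.1 hv_mem.2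
  · have hu_mem := hu.cosSeriesPrimitive_mem_Icc_of_nonpos hu_sum ⟨hθ.1, hθ0⟩
    have hv_mem := hv.cosSeriesPrimitive_mem_Icc_of_nonpos hv_sum ⟨hθ.1, hθ0⟩
    rw [huv] at hu_mem
    simpa using abs_sub_le_of_le_of_le hu_mem.1 hu_mem.2 hv_mem.1 hv_mem.2

end ConvexAntitone

theorem im_pow_eq_norm_pow_mul_sin (z : ℂ) (n : ℕ) :
    (z ^ n).im = ‖z‖ ^ n * Real.sin (n * z.arg) := by
  conv_lhs => rw [← norm_mul_exp_arg_mul_I z, mul_pow, ← Complex.exp_nat_mul, ← mul_assoc]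
  rw [← ofReal_natCast, ← ofReal_mul, ← ofReal_pow, im_ofReal_mul, exp_ofReal_mul_I_im]

namespace ConvexAntitone

variable {v : ℕ → ℝ}

theorem summable_sub_div_mul_pow (hv : ConvexAntitone v) {z : ℂ} (hz : ‖z‖ < 1) :
    Summable fun n : ℕ => (((v 0 - v (n + 1)) / (n + 1) : ℝ) : ℂ) * z ^ (n + 1) := by
  have hgeom : Summable fun n => v 0 * ‖z‖ ^ (n + 1) :=
    ((summable_nat_add_iff 1).2 (summable_geometric_of_lt_one (norm_nonneg z) hz)).mul_left (v 0)
  refine .of_norm_bounded hgeom fun n => ?_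
  have hsub : 0 ≤ v 0 - v (n + 1) := sub_nonneg.2 (hv.antitone (Nat.zero_le _))
  rw [norm_mul, norm_pow, norm_real, Real.norm_of_nonneg (by positivity)]
  gcongr
  calc (v 0 - v (n + 1)) / (n + 1) ≤ v 0 - v (n + 1) :=
        div_le_self hsub (by linarith [n.cast_nonneg (α := ℝ)])
    _ ≤ v 0 := sub_le_self _ (hv.nonneg _)

theorem im_tsum_sub_div_mul_pow_eq_cosSeriesPrimitive_sub (hv : ConvexAntitone v) {z : ℂ}
    (hz : ‖z‖ < 1) :
    (∑' n : ℕ, (((v 0 - v (n + 1)) / (n + 1) : ℝ) : ℂ) * z ^ (n + 1)).im =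
      cosSeriesPrimitive (fun n => v 0 * ‖z‖ ^ n) z.arg -
        cosSeriesPrimitive (fun n => v n * ‖z‖ ^ n) z.arg := by
  have hsummable_const := (const (hv.nonneg 0)).summable_mul_pow (norm_nonneg z) hz
  have hsummable := hv.summable_mul_pow (norm_nonneg z) hz
  rw [Complex.im_tsum (hv.summable_sub_div_mul_pow hz), cosSeriesPrimitive, cosSeriesPrimitive,
    pow_zero, add_sub_add_left_eq_sub,
    ← (summable_div_mul_sin hsummable_const z.arg).tsum_sub (summable_div_mul_sin hsummable z.arg)]
  refine tsum_congr fun n => ?_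
  rw [im_ofReal_mul, im_pow_eq_norm_pow_mul_sin, Nat.cast_succ]
  ring

theorem abs_im_tsum_sub_div_mul_pow_le (hv : ConvexAntitone v) {z : ℂ} (hz : ‖z‖ < 1) :
    |(∑' n : ℕ, (((v 0 - v (n + 1)) / (n + 1) : ℝ) : ℂ) * z ^ (n + 1)).im| ≤
      v 0 * (Real.pi / 2) := by
  have hconst : ConvexAntitone fun _ => v 0 := const (hv.nonneg 0)
  have hpow : ConvexAntitone fun n => ‖z‖ ^ n := pow (norm_nonneg z) hz.le
  rw [hv.im_tsum_sub_div_mul_pow_eq_cosSeriesPrimitive_sub hz]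
  simpa using (hconst.mul hpow).abs_cosSeriesPrimitive_sub_le (hv.mul hpow)
    (hconst.summable_mul_pow (norm_nonneg z) hz) (hv.summable_mul_pow (norm_nonneg z) hz) rfl
    ⟨(neg_pi_lt_arg z).le, arg_le_pi z⟩

end ConvexAntitone

theorem ordinaryHypergeometricCoefficient_pos {a b c : ℝ} (ha : 0 < a) (hb : 0 < b) (hc : 0 < c)
    (n : ℕ) : 0 < ordinaryHypergeometricCoefficient a b c n := by
  have ha' := ascPochhammer_pos n a ha
  have hb' := ascPochhammer_pos n b hb
  have hc' := ascPochhammer_pos n c hc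
  positivity

theorem ordinaryHypergeometricCoefficient_succ (a b c : ℝ) (n : ℕ) :
    ordinaryHypergeometricCoefficient a b c (n + 1) =
      ordinaryHypergeometricCoefficient a b c n *
        ((a + n) * (b + n) / ((c + n) * (n + 1))) := by
  simp only [ordinaryHypergeometricCoefficient, ascPochhammer_succ_eval, Nat.factorial_succ,
    Nat.cast_mul, Nat.cast_succ, mul_inv, div_eq_mul_inv]
  ring

theorem mul_hyperF_eq_tsum (a b c : ℝ) (z : ℂ) :
    z * hyperF a b c z =
      ∑' n : ℕ, ((ordinaryHypergeometricCoefficient a b c n : ℝ) : ℂ) * z ^ (n + 1) := by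
  rw [hyperF, ← tsum_mul_left]
  refine tsum_congr fun n => ?_
  simp only [ordinaryHypergeometricCoefficient, div_eq_mul_inv, mul_inv]
  push_cast
  ring

/-- The multipliers `λₙ` in `z F(a,b;a+b;z) = ∑ λₙ zⁿ / n`. At `n = 0` the truncated index `n - 1`
is harmless, since the factor `n` makes `λ₀ = 0`. -/
noncomputable def hyperMultiplier (a b : ℝ) (n : ℕ) : ℝ :=
  n * ordinaryHypergeometricCoefficient a b (a + b) (n - 1)

theorem hyperMultiplier_zero (a b : ℝ) : hyperMultiplier a b 0 = 0 := by
  simp [hyperMultiplier]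

theorem hyperMultiplier_succ_div (a b : ℝ) (n : ℕ) :
    hyperMultiplier a b (n + 1) / (n + 1) = ordinaryHypergeometricCoefficient a b (a + b) n := by
  rw [hyperMultiplier, Nat.cast_succ, Nat.add_sub_cancel, mul_div_cancel_left₀ _ (by positivity)]

theorem gammaSeq_eq_ascPochhammer (x : ℝ) (n : ℕ) :
    Real.GammaSeq x n = (n : ℝ) ^ x * n.factorial / (ascPochhammer ℝ (n + 1)).eval x := by
  have hprod (m : ℕ) : (ascPochhammer ℝ m).eval x = ∏ j ∈ Finset.range m, (x + j) := by
    induction m with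
    | zero => simp
    | succ m ih => rw [ascPochhammer_succ_eval, Finset.prod_range_succ, ih]
  rw [Real.GammaSeq, hprod]

section hyperMultiplier

variable {a b : ℝ}

theorem hyperMultiplier_add_two_eq_gammaSeq (ha : 0 < a) (hb : 0 < b) {n : ℕ} (hn : 0 < n) :
    hyperMultiplier a b (n + 2) = (1 + 1 / ((n : ℝ) + 1)) *
      (Real.GammaSeq (a + b) n / (Real.GammaSeq a n * Real.GammaSeq b n)) := by
  have hn' : (0 : ℝ) < n := Nat.cast_pos.2 hn
  have ha' := (ascPochhammer_pos (n + 1) a ha).ne'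
  have hb' := (ascPochhammer_pos (n + 1) b hb).ne'
  have hab' := (ascPochhammer_pos (n + 1) (a + b) (add_pos ha hb)).ne'
  have hna := (Real.rpow_pos_of_pos hn' a).ne'
  have hnb := (Real.rpow_pos_of_pos hn' b).ne'
  simp only [hyperMultiplier, ordinaryHypergeometricCoefficient, gammaSeq_eq_ascPochhammer,
    Real.rpow_add hn', Nat.add_succ_sub_one, Nat.factorial_succ]
  push_cast
  field_simp
  ring

theorem tendsto_hyperMultiplier (ha : 0 < a) (hb : 0 < b) :
    Tendsto (hyperMultiplier a b) atTop
      (nhds (Real.Gamma (a + b) / (Real.Gamma a * Real.Gamma b))) := by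
  have hGamma : Real.Gamma a * Real.Gamma b ≠ 0 :=
    (mul_pos (Real.Gamma_pos_of_pos ha) (Real.Gamma_pos_of_pos hb)).ne'
  have hlim := (tendsto_one_div_add_atTop_nhds_zero_nat (𝕜 := ℝ)).const_add 1 |>.mul <|
    (Real.GammaSeq_tendsto_Gamma (a + b)).div
      ((Real.GammaSeq_tendsto_Gamma a).mul (Real.GammaSeq_tendsto_Gamma b)) hGamma
  rw [add_zero, one_mul] at hlim
  rw [← tendsto_add_atTop_iff_nat 2]
  refine hlim.congr' ?_
  filter_upwards [eventually_gt_atTop 0] with n hn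
  exact (hyperMultiplier_add_two_eq_gammaSeq ha hb hn).symm

theorem hyperMultiplier_second_difference_succ (hab : 0 < a + b) (n : ℕ) :
    2 * hyperMultiplier a b (n + 2) - hyperMultiplier a b (n + 1) - hyperMultiplier a b (n + 3) =
      ordinaryHypergeometricCoefficient a b (a + b) n /
          ((a + b + n) * (n + 1) * (a + b + n + 1) * (n + 2)) *
        (2 * (a * b - 1) * ((n : ℝ) + 1) ^ 2 +
          (3 * ((a - 1) * (b - 1)) + (a * b - 1) * (2 - (a - 1) * (b - 1))) * (n + 1) +
          2 * ((a - 1) * (b - 1)) * (1 - (a - 1) * (b - 1))) := by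
  have hn : a + b + n ≠ 0 := by positivity
  have hn_succ : a + b + (n + 1) ≠ 0 := by positivity
  have hn_two : (n : ℝ) + 1 + 1 ≠ 0 := by positivity
  simp only [hyperMultiplier, Nat.add_one_sub_one, ordinaryHypergeometricCoefficient_succ]
  generalize ordinaryHypergeometricCoefficient a b (a + b) n = c
  push_cast
  field_simp
  ring

theorem hyperMultiplier_concave (ha : 1 ≤ a) (hb : 1 ≤ b) (hab : a * b ≤ a + b) (n : ℕ) :
    hyperMultiplier a b n + hyperMultiplier a b (n + 2) ≤ 2 * hyperMultiplier a b (n + 1) := by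
  cases n with
  | zero =>
    have hone : hyperMultiplier a b 1 = 1 := by
      simp [hyperMultiplier, ordinaryHypergeometricCoefficient]
    have htwo : hyperMultiplier a b 2 = 2 * (a * b / (a + b)) := by
      simp [hyperMultiplier, ordinaryHypergeometricCoefficient, div_eq_mul_inv]
    have hratio : a * b / (a + b) ≤ 1 := (div_le_one (by linarith)).2 hab
    rw [hyperMultiplier_zero, hone, htwo]
    linarith
  | succ n =>
    have hcoeff := (ordinaryHypergeometricCoefficient_pos (by linarith : 0 < a)
      (by linarith : 0 < b) (by linarith : 0 < a + b) n).le
    have hsum : 0 < a + b := by linarith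
    have hprod : 0 ≤ (a - 1) * (b - 1) := mul_nonneg (by linarith) (by linarith)
    have hprod_le_one : 0 ≤ 1 - (a - 1) * (b - 1) := by linarith
    have hprod_le_two : 0 ≤ 2 - (a - 1) * (b - 1) := by linarith
    have hab_ge : 0 ≤ a * b - 1 := by linarith
    rw [← sub_nonneg, ← sub_sub, hyperMultiplier_second_difference_succ hsum]
    -- `positivity` would unfold the reducible coefficient and then miss `hcoeff`.
    generalize ordinaryHypergeometricCoefficient a b (a + b) n = c at hcoeff
    positivity

theorem convexAntitone_sub_hyperMultiplier (ha : 1 ≤ a) (hb : 1 ≤ b) (hab : a * b ≤ a + b) :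
    ConvexAntitone fun n =>
      Real.Gamma (a + b) / (Real.Gamma a * Real.Gamma b) - hyperMultiplier a b n := by
  refine .of_convex_of_tendsto_zero
    (fun n => by linarith [hyperMultiplier_concave ha hb hab n]) ?_
  simpa using (tendsto_hyperMultiplier (by linarith : 0 < a) (by linarith : 0 < b)).const_sub
    (Real.Gamma (a + b) / (Real.Gamma a * Real.Gamma b))

end hyperMultiplier

theorem stmt_3_general (a b : ℝ) (ha : 1 ≤ a) (hb : 1 ≤ b) (hab : a * b ≤ a + b) :
    ∀ z ∈ Metric.ball (0 : ℂ) 1,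
      |(z * hyperF a b (a + b) z).im| ≤
        Real.pi / (2 * (Real.Gamma a * Real.Gamma b / Real.Gamma (a + b))) := by
  intro z hz
  have hconvex := convexAntitone_sub_hyperMultiplier ha hb hab
  have hbound := hconvex.abs_im_tsum_sub_div_mul_pow_le (mem_ball_zero_iff.1 hz)
  simp only [hyperMultiplier_zero, sub_zero, sub_sub_cancel, hyperMultiplier_succ_div] at hbound
  rw [mul_hyperF_eq_tsum]
  refine hbound.trans_eq ?_
  field_simp

theorem stmt_3 (a b : ℝ)
    (h : (a = 1 ∧ 1 ≤ b ∧ b ≤ 4) ∨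
         (1 < a ∧ a ≤ b ∧ b ≤ 3 ∧ b ≤ 1 + a ∧ b ≤ 4 * a / (5 * a - 4))) :
    ∀ z ∈ Metric.ball (0 : ℂ) 1,
      |(z * hyperF a b (a + b) z).im| ≤
        Real.pi / (2 * (Real.Gamma a * Real.Gamma b / Real.Gamma (a + b))) := by
  rcases h with ⟨rfl, hb, -⟩ | ⟨ha, hab, -, -, hb⟩
  · exact stmt_3_general 1 b le_rfl hb (by norm_num)
  · rw [le_div_iff₀ (by linarith)] at hb
    exact stmt_3_general a b ha.le (by linarith) (by linarith)
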